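/- Let 𝒳, 𝒴, 𝒵 be finite sets, R > 0, and let P_{XYZ}, Q_{XYZ} be pmfs on 𝒳×𝒴×𝒵 with D(P_{XY}‖Q_{XY}) < ∞ and D(P_{XZ}‖Q_{XZ}) < ∞. Then E_{P_{XY},Q_{XY}}(R) ≤ G_{P_{XY},Q_{XY},P_{XZ},Q_{XZ}}(R) + E_{P_{XZ},Q_{XZ}}(R). -/

import Mathlib

open scoped BigOperators

noncomputable section

open Classical in
/-- Pushforward of a finitely supported mass function along a map. -/
def pushf {Ω α : Type*} [Fintype Ω] (p : Ω → ℝ) (f : Ω → α) : α → ℝ :=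
  fun a => ∑ ω, if f ω = a then p ω else 0

/-- `p` is a probability mass function. -/
def IsPMF {α : Type*} [Fintype α] (p : α → ℝ) : Prop :=
  (∀ a, 0 ≤ p a) ∧ ∑ a, p a = 1

/-- Kullback–Leibler divergence `D(p‖q)` of mass functions, valued in `EReal`
(equal to `⊤` if `p` is not absolutely continuous w.r.t. `q`). -/
def klDiv {α : Type*} [Fintype α] (p q : α → ℝ) : EReal :=
  if ∀ a, q a = 0 → p a = 0 then ((∑ a, p a * Real.log (p a / q a) : ℝ) : EReal) else ⊤

/-- Shannon entropy. -/
def entropy {α : Type*} [Fintype α] (p : α → ℝ) : ℝ :=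
  -∑ a, p a * Real.log (p a)

/-- Conditional mutual information `I(A;B|C)` under the mass function `p`. -/
def condMI {Ω α β γ : Type*} [Fintype Ω] [Fintype α] [Fintype β] [Fintype γ]
    (p : Ω → ℝ) (A : Ω → α) (B : Ω → β) (C : Ω → γ) : ℝ :=
  entropy (pushf p (fun ω => (A ω, C ω))) + entropy (pushf p (fun ω => (B ω, C ω)))
    - entropy (pushf p (fun ω => (A ω, B ω, C ω))) - entropy (pushf p C)

/-- First marginal of a joint mass function. -/
def margFst {α β : Type*} [Fintype α] [Fintype β] (p : α × β → ℝ) : α → ℝ :=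
  fun a => ∑ b, p (a, b)

/-- Conditional mass function of the second coordinate given the first. -/
def condSnd {α β : Type*} [Fintype α] [Fintype β] (p : α × β → ℝ) : α → β → ℝ :=
  fun a b => p (a, b) / margFst p a

/-- Output distribution of a channel on an input distribution. -/
def outDist {α β : Type*} [Fintype α] [Fintype β] (ch : α → β → ℝ) (pa : α → ℝ) : β → ℝ :=
  fun b => ∑ a, pa a * ch a b

/-- The difference functional
`f(P'_X) = sup_{Q̂_X ≪ Q_X} D(P'_Y‖Q̂_Y) − D(P'_Z‖Q̂_Z)`. -/
def fdiff {X Y Z : Type*} [Fintype X] [Fintype Y] [Fintype Z]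
    (pYgX : X → Y → ℝ) (pZgX : X → Z → ℝ) (qYgX : X → Y → ℝ) (qZgX : X → Z → ℝ)
    (qX : X → ℝ) (pX' : X → ℝ) : EReal :=
  sSup {d : EReal | ∃ qhX : X → ℝ, IsPMF qhX ∧ (∀ x, qX x = 0 → qhX x = 0) ∧
    d = klDiv (outDist pYgX pX') (outDist qYgX qhX)
        - klDiv (outDist pZgX pX') (outDist qZgX qhX)}

/-- The quantity `G_{P_XY, Q_XY, P_XZ, Q_XZ}(R)`: the supremum over finite sets `𝒰`
(represented by `Fin m`) and channels `P_{U|X}` with `I_P(U;X|Y) ≤ R` and `I_P(U;X|Z) ≤ R`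
of `∑_u P_U(u) f(P_{X|U}(·|u))`. -/
def Gexp {X Y Z : Type*} [Fintype X] [Fintype Y] [Fintype Z]
    (pXY : X × Y → ℝ) (qXY : X × Y → ℝ) (pXZ : X × Z → ℝ) (qXZ : X × Z → ℝ)
    (R : ℝ) : EReal :=
  sSup {v : EReal | ∃ (m : ℕ) (ch : X → Fin m → ℝ),
    (∀ x, IsPMF (ch x)) ∧
    condMI (fun w : Fin m × X × Y => ch w.2.1 w.1 * pXY (w.2.1, w.2.2))
      (fun w => w.1) (fun w => w.2.1) (fun w => w.2.2) ≤ R ∧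
    condMI (fun w : Fin m × X × Z => ch w.2.1 w.1 * pXZ (w.2.1, w.2.2))
      (fun w => w.1) (fun w => w.2.1) (fun w => w.2.2) ≤ R ∧
    v = ∑ u : Fin m,
      ((∑ x, ch x u * margFst pXY x : ℝ) : EReal) *
        fdiff (condSnd pXY) (condSnd pXZ) (condSnd qXY) (condSnd qXZ)
          (margFst qXY)
          (fun x => ch x u * margFst pXY x / ∑ x', ch x' u * margFst pXY x')}

/-- The error exponent of distributed hypothesis testing, via the Ahlswede–Csiszár
multi-letter characterization. -/
def errExp {X W : Type*} [Fintype X] [Fintype W]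
    (pXW qXW : X × W → ℝ) (R : ℝ) : EReal :=
  sSup {v : EReal | ∃ n : ℕ, 0 < n ∧
    ∃ κ : (Fin n → X) → Fin (2 ^ ⌊(n : ℝ) * R⌋₊) → ℝ,
      (∀ x, IsPMF (κ x)) ∧
      v = (((n : ℝ)⁻¹ : ℝ) : EReal) *
        klDiv
          (fun mw : Fin (2 ^ ⌊(n : ℝ) * R⌋₊) × (Fin n → W) =>
            ∑ x : Fin n → X, (∏ i, pXW (x i, mw.2 i)) * κ x mw.1)
          (fun mw : Fin (2 ^ ⌊(n : ℝ) * R⌋₊) × (Fin n → W) =>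
            ∑ x : Fin n → X, (∏ i, qXW (x i, mw.2 i)) * κ x mw.1)}

section AddSub

open Real

theorem as_sum_cons {X : Type*} [Fintype X] {n : ℕ} (F : (Fin (n+1) → X) → ℝ) :
    ∑ f, F f = ∑ x0, ∑ x', F (Fin.cons x0 x') := by
  rw [← Fintype.sum_prod_type']
  exact (Fintype.sum_equiv (Fin.consEquiv (fun _ => X)) _ _ (fun _ => rfl)).symm

/-- pointwise form of the log-sum inequality -/
theorem as_pt (α β A B : ℝ) (hα : 0 ≤ α) (hβ : 0 ≤ β) (hA : 0 ≤ A) (hB : 0 ≤ B)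
    (h1 : β = 0 → α = 0) (h2 : A = 0 → α = 0) (h3 : B = 0 → α = 0) :
    α - β * (A / B) ≤ α * (log α - log β - log A + log B) := by
  rcases hα.eq_or_lt with h | h
  · rw [← h]; simp only [zero_mul, zero_sub]
    have : 0 ≤ β * (A / B) := by positivity
    linarith
  · have hβ' : 0 < β := lt_of_le_of_ne hβ (fun e => h.ne' (h1 e.symm))
    have hA' : 0 < A := lt_of_le_of_ne hA (fun e => h.ne' (h2 e.symm))
    have hB' : 0 < B := lt_of_le_of_ne hB (fun e => h.ne' (h3 e.symm))
    have := Real.log_le_sub_one_of_pos (show 0 < (β * A) / (α * B) by positivity)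
    rw [Real.log_div (by positivity) (by positivity), Real.log_mul hβ'.ne' hA'.ne',
      Real.log_mul h.ne' hB'.ne'] at this
    have h5 : α * ((β * A) / (α * B) - 1) = β * (A / B) - α := by
      field_simp
    nlinarith [mul_le_mul_of_nonneg_left this h.le]

theorem as_logsum {ι : Type*} [Fintype ι] (α β : ι → ℝ) (hα : ∀ i, 0 ≤ α i) (hβ : ∀ i, 0 ≤ β i)
    (h : ∀ i, β i = 0 → α i = 0) :
    (∑ i, α i) * (log (∑ i, α i) - log (∑ i, β i)) ≤ ∑ i, α i * (log (α i) - log (β i)) := by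
  have hA : 0 ≤ ∑ i, α i := Finset.sum_nonneg fun i _ => hα i
  have hB : 0 ≤ ∑ i, β i := Finset.sum_nonneg fun i _ => hβ i
  have hA0 : ∀ i, ∑ i, α i = 0 → α i = 0 := fun i e =>
    (Finset.sum_eq_zero_iff_of_nonneg (fun i _ => hα i)).1 e i (Finset.mem_univ _)
  have hB0 : ∀ i, ∑ i, β i = 0 → α i = 0 := fun i e =>
    h i ((Finset.sum_eq_zero_iff_of_nonneg (fun i _ => hβ i)).1 e i (Finset.mem_univ _))
  have key := Finset.sum_le_sum (s := Finset.univ) fun i _ =>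
    as_pt (α i) (β i) (∑ i, α i) (∑ i, β i) (hα i) (hβ i) hA hB (h i) (hA0 i) (hB0 i)
  have e1 : ∑ i, (α i - β i * ((∑ i, α i) / (∑ i, β i))) = 0 := by
    rw [Finset.sum_sub_distrib, ← Finset.sum_mul]
    rcases eq_or_ne (∑ i, β i) 0 with e | e
    · have : ∑ i, α i = 0 := Finset.sum_eq_zero fun i _ => hB0 i e
      rw [this, e]; simp
    · field_simp; simp
  have e2 : ∑ i, α i * (log (α i) - log (β i) - log (∑ i, α i) + log (∑ i, β i))
      = ∑ i, α i * (log (α i) - log (β i))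
        - (∑ i, α i) * (log (∑ i, α i) - log (∑ i, β i)) := by
    rw [Finset.sum_mul, ← Finset.sum_sub_distrib]
    exact Finset.sum_congr rfl fun i _ => by ring
  rw [e1, e2] at key
  linarith

/-- data processing -/
theorem as_dpi {A B Y Z : Type*} [Fintype A] [Fintype B] [Fintype Y] [Fintype Z]
    (a : A → Y → ℝ) (b : B → Z → ℝ) (ha : ∀ x y, 0 ≤ a x y) (hb : ∀ x y, 0 ≤ b x y)
    (ha1 : ∀ x, ∑ y, a x y = 1) (hb1 : ∀ x, ∑ y, b x y = 1)
    (μ : A → B → ℝ) (hμ : ∀ x y, 0 ≤ μ x y) :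
    ∑ y, ∑ z, negMulLog (∑ x, (∑ x', μ x x' * b x' z) * a x y)
      - ∑ x, ∑ z, negMulLog (∑ x', μ x x' * b x' z)
    ≤ ∑ y, ∑ x', negMulLog (∑ x, μ x x' * a x y) - ∑ x, ∑ x', negMulLog (μ x x') := by
  have key : ∀ x y z, a x y * ((∑ x', μ x x' * b x' z) * (log (∑ x', μ x x' * b x' z)
        - log (∑ x', (∑ x, μ x x' * a x y) * b x' z)))
      ≤ a x y * ∑ x', (μ x x' * b x' z) * (log (μ x x') - log (∑ x, μ x x' * a x y)) := by
    intro x y z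
    rcases (ha x y).eq_or_lt with h | h
    · rw [← h]; simp
    · refine mul_le_mul_of_nonneg_left ?_ h.le
      have hs : ∀ x', 0 ≤ ∑ x, μ x x' * a x y := fun x' =>
        Finset.sum_nonneg fun x _ => mul_nonneg (hμ _ _) (ha _ _)
      have h0 : ∀ x', ∑ x, μ x x' * a x y = 0 → μ x x' = 0 := by
        intro x' e
        have := (Finset.sum_eq_zero_iff_of_nonneg
          (fun x _ => mul_nonneg (hμ x x') (ha x y))).1 e x (Finset.mem_univ _)
        exact (mul_eq_zero.1 this).resolve_right h.ne'
      refine (as_logsum (fun x' => μ x x' * b x' z) (fun x' => (∑ x, μ x x' * a x y) * b x' z)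
        (fun x' => mul_nonneg (hμ _ _) (hb _ _)) (fun x' => mul_nonneg (hs _) (hb _ _)) ?_).trans
        (le_of_eq ?_)
      · intro x' e
        rcases mul_eq_zero.1 e with e | e
        · simp [h0 x' e]
        · simp [e]
      · refine Finset.sum_congr rfl fun x' _ => ?_
        rcases eq_or_ne (b x' z) 0 with e | e
        · simp [e]
        rcases eq_or_ne (μ x x') 0 with e' | e'
        · simp [e']
        rw [log_mul e' e, log_mul (fun e'' => e' (h0 x' e'')) e]
        ring
  have key2 : ∑ x, ∑ y, ∑ z, _ ≤ ∑ x, ∑ y, ∑ z, _ := Finset.sum_le_sum fun x _ =>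
    Finset.sum_le_sum fun y _ => Finset.sum_le_sum fun z _ => key x y z
  have eR : ∑ y, ∑ x', negMulLog (∑ x, μ x x' * a x y) - ∑ x, ∑ x', negMulLog (μ x x')
      = ∑ x, ∑ y, ∑ z, a x y * ∑ x', (μ x x' * b x' z) *
          (log (μ x x') - log (∑ x, μ x x' * a x y)) := by
    have h1 : ∀ x y, ∑ z, a x y * ∑ x', (μ x x' * b x' z) *
          (log (μ x x') - log (∑ x, μ x x' * a x y))
        = ∑ x', a x y * μ x x' * (log (μ x x') - log (∑ x, μ x x' * a x y)) := by
      intro x y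
      rw [← Finset.mul_sum, Finset.sum_comm, Finset.mul_sum]
      refine Finset.sum_congr rfl fun x' _ => ?_
      have : ∀ z, (μ x x' * b x' z) * (log (μ x x') - log (∑ x, μ x x' * a x y))
        = b x' z * (μ x x' * (log (μ x x') - log (∑ x, μ x x' * a x y))) := fun z => by ring
      simp_rw [this]
      rw [← Finset.sum_mul, hb1]; ring
    simp_rw [h1, mul_sub, Finset.sum_sub_distrib]
    have h2 : ∑ x, ∑ y, ∑ x', a x y * μ x x' * log (μ x x') = - ∑ x, ∑ x', negMulLog (μ x x') := by
      rw [← Finset.sum_neg_distrib]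
      refine Finset.sum_congr rfl fun x _ => ?_
      rw [Finset.sum_comm, ← Finset.sum_neg_distrib]
      refine Finset.sum_congr rfl fun x' _ => ?_
      simp_rw [mul_assoc]
      rw [← Finset.sum_mul, ha1, negMulLog]; ring
    have h3 : ∑ x, ∑ y, ∑ x', a x y * μ x x' * log (∑ x, μ x x' * a x y)
        = - ∑ y, ∑ x', negMulLog (∑ x, μ x x' * a x y) := by
      rw [Finset.sum_comm, ← Finset.sum_neg_distrib]
      refine Finset.sum_congr rfl fun y _ => ?_
      rw [Finset.sum_comm, ← Finset.sum_neg_distrib]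
      refine Finset.sum_congr rfl fun x' _ => ?_
      rw [← Finset.sum_mul, negMulLog]
      simp_rw [mul_comm (a _ y)]
      ring
    rw [h2, h3]; ring
  have eL : ∑ y, ∑ z, negMulLog (∑ x, (∑ x', μ x x' * b x' z) * a x y)
      - ∑ x, ∑ z, negMulLog (∑ x', μ x x' * b x' z)
      = ∑ x, ∑ y, ∑ z, a x y * ((∑ x', μ x x' * b x' z) * (log (∑ x', μ x x' * b x' z)
        - log (∑ x', (∑ x, μ x x' * a x y) * b x' z))) := by
    have h0 : ∀ y z, ∑ x', (∑ x, μ x x' * a x y) * b x' z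
        = ∑ x, (∑ x', μ x x' * b x' z) * a x y := by
      intro y z
      simp_rw [Finset.sum_mul]
      rw [Finset.sum_comm]
      exact Finset.sum_congr rfl fun _ _ => Finset.sum_congr rfl fun _ _ => by ring
    simp_rw [h0, mul_sub, Finset.sum_sub_distrib]
    have h2 : ∑ x, ∑ y, ∑ z, a x y * ((∑ x', μ x x' * b x' z) * log (∑ x', μ x x' * b x' z))
        = - ∑ x, ∑ z, negMulLog (∑ x', μ x x' * b x' z) := by
      rw [← Finset.sum_neg_distrib]
      refine Finset.sum_congr rfl fun x _ => ?_
      rw [Finset.sum_comm, ← Finset.sum_neg_distrib]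
      refine Finset.sum_congr rfl fun x' _ => ?_
      rw [← Finset.sum_mul, ha1, negMulLog]; ring
    have h3 : ∑ x, ∑ y, ∑ z, a x y * ((∑ x', μ x x' * b x' z) *
          log (∑ x, (∑ x', μ x x' * b x' z) * a x y))
        = - ∑ y, ∑ z, negMulLog (∑ x, (∑ x', μ x x' * b x' z) * a x y) := by
      rw [Finset.sum_comm, ← Finset.sum_neg_distrib]
      refine Finset.sum_congr rfl fun y _ => ?_
      rw [Finset.sum_comm, ← Finset.sum_neg_distrib]
      refine Finset.sum_congr rfl fun x' _ => ?_
      simp_rw [← mul_assoc]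
      rw [← Finset.sum_mul, negMulLog]
      simp_rw [mul_comm (a _ y)]
      ring
    rw [h2, h3]; ring
  rw [eL, eR]
  exact key2

def asO {M X Y : Type*} [Fintype X] {n : ℕ} (a : X → Y → ℝ) (μ : M → (Fin n → X) → ℝ) :
    M → (Fin n → Y) → ℝ := fun m y => ∑ x, μ m x * ∏ i, a (x i) (y i)

def askt (p q : ℝ) : ℝ := p * log (p / q)

theorem as_sum_vch {X Y : Type*} [Fintype Y] {n : ℕ} (a : X → Y → ℝ)
    (ha1 : ∀ x, ∑ y, a x y = 1) (x : Fin n → X) : ∑ y : Fin n → Y, ∏ i, a (x i) (y i) = 1 := by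
  classical
  rw [← Fintype.piFinset_univ, ← Finset.prod_univ_sum]
  simp [ha1]

universe uX uY uZ

theorem as_pos_sum {ι : Type*} [Fintype ι] {f g : ι → ℝ} (hf : ∀ i, 0 ≤ f i)
    (h : ∀ i, g i ≠ 0 → f i ≠ 0) (hg : ∑ i, g i ≠ 0) : ∑ i, f i ≠ 0 := by
  obtain ⟨i, -, hi⟩ := Finset.exists_ne_zero_of_sum_ne_zero hg
  intro e
  exact h i hi ((Finset.sum_eq_zero_iff_of_nonneg (fun i _ => hf i)).1 e i (Finset.mem_univ _))

theorem as_dom_mul {a b c d : ℝ} (h1 : a ≠ 0 → c ≠ 0) (h2 : b ≠ 0 → d ≠ 0) :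
    a * b ≠ 0 → c * d ≠ 0 := fun h =>
  mul_ne_zero (h1 (left_ne_zero_of_mul h)) (h2 (right_ne_zero_of_mul h))

theorem as_dom_prod {ι : Type*} [Fintype ι] {f g : ι → ℝ} (h : ∀ i, f i ≠ 0 → g i ≠ 0) :
    ∏ i, f i ≠ 0 → ∏ i, g i ≠ 0 := fun h' =>
  Finset.prod_ne_zero_iff.2 fun i hi => h i (Finset.prod_ne_zero_iff.1 h' i hi)

/-- the marginal bookkeeping in the induction step -/
theorem as_marg_step {M X Y Z : Type*} [Fintype M] [Fintype X] [Fintype Y] [Fintype Z] {n : ℕ}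
    (a : X → Y → ℝ) (b : X → Z → ℝ) (ha1 : ∀ x, ∑ y, a x y = 1) (hb1 : ∀ x, ∑ y, b x y = 1)
    (μ : M → (Fin (n+1) → X) → ℝ) (φ : X → ℝ) :
    (∑ my : M × Y, ∑ x' : Fin n → X, (∑ x0, μ my.1 (Fin.cons x0 x') * a x0 my.2) * ∑ i, φ (x' i))
    + (∑ mz : M × (Fin n → Z), ∑ x0,
        (∑ x' : Fin n → X, μ mz.1 (Fin.cons x0 x') * ∏ i, b (x' i) (mz.2 i)) * φ x0)
    = ∑ m, ∑ x, μ m x * ∑ i, φ (x i) := by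
  rw [Fintype.sum_prod_type, Fintype.sum_prod_type, ← Finset.sum_add_distrib]
  refine Finset.sum_congr rfl fun m _ => ?_
  rw [as_sum_cons]
  have h1 : ∑ y, ∑ x' : Fin n → X, (∑ x0, μ m (Fin.cons x0 x') * a x0 y) * ∑ i, φ (x' i)
      = ∑ x0, ∑ x' : Fin n → X, μ m (Fin.cons x0 x') * ∑ i, φ (x' i) := by
    rw [Finset.sum_comm, Finset.sum_comm (s := (Finset.univ : Finset X))]
    refine Finset.sum_congr rfl fun x' _ => ?_
    rw [← Finset.sum_mul, Finset.sum_comm, Finset.sum_mul]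
    refine Finset.sum_congr rfl fun x0 _ => ?_
    rw [← Finset.mul_sum, ha1, mul_one]
  have h2 : ∑ z : Fin n → Z, ∑ x0,
        (∑ x' : Fin n → X, μ m (Fin.cons x0 x') * ∏ i, b (x' i) (z i)) * φ x0
      = ∑ x0, ∑ x' : Fin n → X, μ m (Fin.cons x0 x') * φ x0 := by
    rw [Finset.sum_comm]
    refine Finset.sum_congr rfl fun x0 _ => ?_
    rw [← Finset.sum_mul, Finset.sum_comm, Finset.sum_mul]
    refine Finset.sum_congr rfl fun x' _ => ?_
    rw [← Finset.mul_sum, as_sum_vch b hb1, mul_one]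
  rw [h1, h2, ← Finset.sum_add_distrib]
  refine Finset.sum_congr rfl fun x0 _ => ?_
  rw [← Finset.sum_add_distrib]
  refine Finset.sum_congr rfl fun x' _ => ?_
  rw [Fin.sum_univ_succ]
  simp only [Fin.cons_zero, Fin.cons_succ]
  ring

theorem as_asO_cons {M X Y : Type*} [Fintype X] {n : ℕ} (a : X → Y → ℝ)
    (μ : M → (Fin (n+1) → X) → ℝ) (m : M) (y0 : Y) (y' : Fin n → Y) :
    asO a μ m (Fin.cons y0 y') = ∑ x', (∑ x0, μ m (Fin.cons x0 x') * a x0 y0)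
      * ∏ i, a (x' i) (y' i) := by
  unfold asO
  rw [as_sum_cons, Finset.sum_comm]
  refine Finset.sum_congr rfl fun x' _ => ?_
  rw [Finset.sum_mul]
  refine Finset.sum_congr rfl fun x0 _ => ?_
  rw [Fin.prod_univ_succ]
  simp only [Fin.cons_zero, Fin.cons_succ]
  ring

theorem as_asO_cons' {M X Y : Type*} [Fintype X] {n : ℕ} (a : X → Y → ℝ)
    (μ : M → (Fin (n+1) → X) → ℝ) (m : M) (y0 : Y) (y' : Fin n → Y) :
    asO a μ m (Fin.cons y0 y') = ∑ x0, (∑ x', μ m (Fin.cons x0 x')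
      * ∏ i, a (x' i) (y' i)) * a x0 y0 := by
  rw [as_asO_cons]
  simp_rw [Finset.sum_mul]
  rw [Finset.sum_comm]
  exact Finset.sum_congr rfl fun _ _ => Finset.sum_congr rfl fun _ _ => by ring

theorem as_single_letter {X : Type uX} {Y : Type uY} {Z : Type uZ}
    [Fintype X] [Fintype Y] [Fintype Z]
    (aP aQ : X → Y → ℝ) (bP bQ : X → Z → ℝ)
    (haP : ∀ x y, 0 ≤ aP x y) (haQ : ∀ x y, 0 ≤ aQ x y)
    (hbP : ∀ x y, 0 ≤ bP x y) (hbQ : ∀ x y, 0 ≤ bQ x y)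
    (haP1 : ∀ x, ∑ y, aP x y = 1) (haQ1 : ∀ x, ∑ y, aQ x y = 1)
    (hbP1 : ∀ x, ∑ y, bP x y = 1) (hbQ1 : ∀ x, ∑ y, bQ x y = 1)
    (had : ∀ x y, aP x y ≠ 0 → aQ x y ≠ 0) (hbd : ∀ x y, bP x y ≠ 0 → bQ x y ≠ 0) :
    ∀ (n : ℕ) (M : Type (max uY uZ)) [Fintype M] (μ ν : M → (Fin n → X) → ℝ)
      (_ : ∀ m x, 0 ≤ μ m x) (_ : ∀ m x, 0 ≤ ν m x) (_ : ∀ m x, μ m x ≠ 0 → ν m x ≠ 0),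
    ∃ (U : Type (max uY uZ)) (_ : Fintype U) (r s : U → X → ℝ),
      (∀ u x, 0 ≤ r u x) ∧ (∀ u x, 0 ≤ s u x) ∧ (∀ u x, r u x ≠ 0 → s u x ≠ 0) ∧
      (∀ φ : X → ℝ, ∑ u, ∑ x, r u x * φ x = ∑ m, ∑ x, μ m x * ∑ i, φ (x i)) ∧
      (∀ φ : X → ℝ, ∑ u, ∑ x, s u x * φ x = ∑ m, ∑ x, ν m x * ∑ i, φ (x i)) ∧
      (∑ m, ∑ y, askt (asO aP μ m y) (asO aQ ν m y) - ∑ m, ∑ z, askt (asO bP μ m z) (asO bQ ν m z)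
        = ∑ u, (∑ y, askt (outDist aP (r u) y) (outDist aQ (s u) y)
            - ∑ z, askt (outDist bP (r u) z) (outDist bQ (s u) z))) ∧
      (∑ u, (∑ y, negMulLog (outDist aP (r u) y) - ∑ x, negMulLog (r u x))
        ≤ ∑ m, ∑ y, negMulLog (asO aP μ m y) - ∑ m, ∑ x, negMulLog (μ m x)) ∧
      (∑ u, (∑ z, negMulLog (outDist bP (r u) z) - ∑ x, negMulLog (r u x))
        ≤ ∑ m, ∑ z, negMulLog (asO bP μ m z) - ∑ m, ∑ x, negMulLog (μ m x)) := by
  intro n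
  induction n with
  | zero =>
    intro M _ μ ν h1 h2 h3
    refine ⟨PEmpty, inferInstance, fun u => u.elim, fun u => u.elim, fun u => u.elim,
      fun u => u.elim, fun u => u.elim, ?_, ?_, ?_, ?_, ?_⟩
    · intro φ; simp
    · intro φ; simp
    · simp [asO]
    · simp [asO]
    · simp [asO]
  | succ n ih =>
    intro M _ μ ν hμ hν hd
    obtain ⟨U, hU, r, s, hr, hs, hrs, hrφ, hsφ, hK, hIY, hIZ⟩ := ih (M × Y)
      (fun my x' => ∑ x0, μ my.1 (Fin.cons x0 x') * aP x0 my.2)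
      (fun my x' => ∑ x0, ν my.1 (Fin.cons x0 x') * aQ x0 my.2)
      (fun my x' => Finset.sum_nonneg fun _ _ => mul_nonneg (hμ _ _) (haP _ _))
      (fun my x' => Finset.sum_nonneg fun _ _ => mul_nonneg (hν _ _) (haQ _ _))
      (fun my x' => as_pos_sum (fun _ => mul_nonneg (hν _ _) (haQ _ _))
        (fun _ => as_dom_mul (hd _ _) (had _ _)))
    set r2 : M × (Fin n → Z) → X → ℝ := fun mz x0 =>
      ∑ x' : Fin n → X, μ mz.1 (Fin.cons x0 x') * ∏ i, bP (x' i) (mz.2 i) with hr2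
    set s2 : M × (Fin n → Z) → X → ℝ := fun mz x0 =>
      ∑ x' : Fin n → X, ν mz.1 (Fin.cons x0 x') * ∏ i, bQ (x' i) (mz.2 i) with hs2
    -- identifications of output laws
    have eY : ∀ (a : X → Y → ℝ) (μ : M → (Fin (n+1) → X) → ℝ) (m : M) (y0 : Y) (y' : Fin n → Y),
        asO a (fun (my : M × Y) x' => ∑ x0, μ my.1 (Fin.cons x0 x') * a x0 my.2) (m, y0) y'
        = asO a μ m (Fin.cons y0 y') := by
      intro a μ m y0 y'
      rw [as_asO_cons]; rfl
    have eV : ∀ (a : X → Y → ℝ) (b : X → Z → ℝ) (μ : M → (Fin (n+1) → X) → ℝ)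
        (m : M) (y0 : Y) (z' : Fin n → Z),
        asO b (fun (my : M × Y) x' => ∑ x0, μ my.1 (Fin.cons x0 x') * a x0 my.2) (m, y0) z'
        = ∑ x0, (∑ x' : Fin n → X, μ m (Fin.cons x0 x') * ∏ i, b (x' i) (z' i)) * a x0 y0 := by
      intro a b μ m y0 z'
      unfold asO
      simp_rw [Finset.sum_mul]
      rw [Finset.sum_comm]
      exact Finset.sum_congr rfl fun _ _ => Finset.sum_congr rfl fun _ _ => by ring
    -- the key inequality
    have hdpi : ∑ m, ∑ y, ∑ z : Fin n → Z, negMulLog (∑ x, r2 (m, z) x * aP x y)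
        - ∑ m, ∑ x, ∑ z : Fin n → Z, negMulLog (r2 (m, z) x)
        ≤ ∑ m, ∑ y, ∑ x', negMulLog (∑ x, μ m (Fin.cons x x') * aP x y)
          - ∑ m, ∑ x, ∑ x', negMulLog (μ m (Fin.cons x x')) := by
      rw [← Finset.sum_sub_distrib, ← Finset.sum_sub_distrib]
      refine Finset.sum_le_sum fun m _ => ?_
      exact as_dpi aP (fun (x' : Fin n → X) (z : Fin n → Z) => ∏ i, bP (x' i) (z i)) haP
        (fun _ _ => Finset.prod_nonneg fun _ _ => hbP _ _) haP1 (as_sum_vch bP hbP1)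
        (fun x x' => μ m (Fin.cons x x')) (fun _ _ => hμ _ _)
    refine ⟨U ⊕ (M × (Fin n → Z)), inferInstance, Sum.elim r r2, Sum.elim s s2,
      ?_, ?_, ?_, ?_, ?_, ?_, ?_, ?_⟩
    · rintro (u | u) x
      · exact hr u x
      · exact Finset.sum_nonneg fun _ _ =>
          mul_nonneg (hμ _ _) (Finset.prod_nonneg fun _ _ => hbP _ _)
    · rintro (u | u) x
      · exact hs u x
      · exact Finset.sum_nonneg fun _ _ =>
          mul_nonneg (hν _ _) (Finset.prod_nonneg fun _ _ => hbQ _ _)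
    · rintro (u | u) x
      · exact hrs u x
      · exact as_pos_sum (fun _ => mul_nonneg (hν _ _) (Finset.prod_nonneg fun _ _ => hbQ _ _))
          (fun _ => as_dom_mul (hd _ _) (as_dom_prod fun _ => hbd _ _))
    · intro φ
      rw [Fintype.sum_sum_type, ← as_marg_step aP bP haP1 hbP1 μ φ]
      simp only [Sum.elim_inl, Sum.elim_inr]
      rw [hrφ]
    · intro φ
      rw [Fintype.sum_sum_type, ← as_marg_step aQ bQ haQ1 hbQ1 ν φ]
      simp only [Sum.elim_inl, Sum.elim_inr]
      rw [hsφ]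
    · rw [Fintype.sum_sum_type]
      simp only [Sum.elim_inl, Sum.elim_inr]
      rw [← hK, Fintype.sum_prod_type, Fintype.sum_prod_type, Fintype.sum_prod_type]
      simp only [eY, eV, as_sum_cons, Finset.sum_sub_distrib, outDist, hr2, hs2]
      simp only [as_asO_cons' bP, as_asO_cons' bQ]
      have c1 : ∀ m, ∑ y0, ∑ z' : Fin n → Z,
          askt (∑ x0, (∑ x' : Fin n → X, μ m (Fin.cons x0 x') * ∏ i, bP (x' i) (z' i)) * aP x0 y0)
            (∑ x0, (∑ x' : Fin n → X, ν m (Fin.cons x0 x') * ∏ i, bQ (x' i) (z' i)) * aQ x0 y0)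
          = ∑ z' : Fin n → Z, ∑ y0,
          askt (∑ x0, (∑ x' : Fin n → X, μ m (Fin.cons x0 x') * ∏ i, bP (x' i) (z' i)) * aP x0 y0)
            (∑ x0, (∑ x' : Fin n → X, ν m (Fin.cons x0 x') * ∏ i, bQ (x' i) (z' i)) * aQ x0 y0) :=
        fun m => Finset.sum_comm
      have c2 : ∀ m, ∑ z0, ∑ z' : Fin n → Z,
          askt (∑ x0, (∑ x' : Fin n → X, μ m (Fin.cons x0 x') * ∏ i, bP (x' i) (z' i)) * bP x0 z0)
            (∑ x0, (∑ x' : Fin n → X, ν m (Fin.cons x0 x') * ∏ i, bQ (x' i) (z' i)) * bQ x0 z0)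
          = ∑ z' : Fin n → Z, ∑ z0,
          askt (∑ x0, (∑ x' : Fin n → X, μ m (Fin.cons x0 x') * ∏ i, bP (x' i) (z' i)) * bP x0 z0)
            (∑ x0, (∑ x' : Fin n → X, ν m (Fin.cons x0 x') * ∏ i, bQ (x' i) (z' i)) * bQ x0 z0) :=
        fun m => Finset.sum_comm
      simp only [c1, c2]
      ring
    all_goals
      rw [Fintype.sum_sum_type]
      simp only [Sum.elim_inl, Sum.elim_inr]
      rw [Fintype.sum_prod_type] at hIY hIZ
      rw [Fintype.sum_prod_type] at hIY hIZ
      simp only [eY, eV] at hIY hIZ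
      have c1 : ∀ m, ∑ y, ∑ z : Fin n → Z, negMulLog (∑ x, r2 (m, z) x * aP x y)
        = ∑ z : Fin n → Z, ∑ y, negMulLog (∑ x, r2 (m, z) x * aP x y) :=
        fun m => Finset.sum_comm
      have c2 : ∀ m, ∑ x, ∑ z : Fin n → Z, negMulLog (r2 (m, z) x)
        = ∑ z : Fin n → Z, ∑ x, negMulLog (r2 (m, z) x) :=
        fun m => Finset.sum_comm
      have c3 : ∀ m, ∑ z : Fin n → Z, ∑ z0, negMulLog (∑ x, r2 (m, z) x * bP x z0)
        = ∑ z0, ∑ z : Fin n → Z, negMulLog (∑ x, r2 (m, z) x * bP x z0) :=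
        fun m => Finset.sum_comm
      have c4 : ∀ m z0 (z : Fin n → Z), asO bP μ m (Fin.cons z0 z) = ∑ x, r2 (m, z) x * bP x z0 :=
        fun m z0 z => as_asO_cons' bP μ m z0 z
      have c5 : ∀ m y0 (z : Fin n → Z), ∑ x0, (∑ x' : Fin n → X,
          μ m (Fin.cons x0 x') * ∏ i, bP (x' i) (z i)) * aP x0 y0 = ∑ x, r2 (m, z) x * aP x y0 :=
        fun m y0 z => rfl
      simp only [c1, c2] at hdpi
      simp only [c5, c1] at hIZ
      rw [Fintype.sum_prod_type]
      simp only [as_sum_cons, outDist, Finset.sum_sub_distrib, c3, c4] at hIY hIZ ⊢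
      linarith

theorem as_prod_marg {X : Type*} [Fintype X] {n : ℕ} (p : X → ℝ) (hp : ∑ x, p x = 1)
    (φ : X → ℝ) : ∑ x : Fin n → X, (∏ i, p (x i)) * ∑ i, φ (x i) = n * ∑ x, p x * φ x := by
  induction n with
  | zero => simp
  | succ n ih =>
    have h1 : ∑ x : Fin n → X, ∏ i, p (x i) = 1 :=
      as_sum_vch (X := Unit) (fun _ => p) (fun _ => hp) (fun _ => ())
    rw [as_sum_cons]
    simp only [Fin.prod_univ_succ, Fin.sum_univ_succ, Fin.cons_zero, Fin.cons_succ]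
    have : ∀ (x0 : X) (x' : Fin n → X), (p x0 * ∏ i, p (x' i)) * (φ x0 + ∑ i, φ (x' i))
        = (p x0 * φ x0) * ∏ i, p (x' i) + p x0 * ((∏ i, p (x' i)) * ∑ i, φ (x' i)) :=
      fun _ _ => by ring
    simp only [this, Finset.sum_add_distrib, ← Finset.mul_sum, h1, ih]
    rw [← Finset.sum_mul, ← Finset.sum_mul, hp]
    push_cast
    ring

theorem as_prod_ent {X : Type*} [Fintype X] {n : ℕ} (p : X → ℝ) (hp : ∑ x, p x = 1) :
    ∑ x : Fin n → X, negMulLog (∏ i, p (x i)) = n * ∑ x, negMulLog (p x) := by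
  have := as_prod_marg (n := n) p hp (fun x => - log (p x))
  have e : ∀ x, p x * - log (p x) = negMulLog (p x) := fun x => by rw [negMulLog]; ring
  simp only [e] at this
  rw [← this]
  refine Finset.sum_congr rfl fun x _ => ?_
  by_cases h : ∃ i, p (x i) = 0
  · obtain ⟨i, hi⟩ := h
    rw [Finset.prod_eq_zero (Finset.mem_univ i) hi]; simp
  · push Not at h
    rw [negMulLog, Real.log_prod (fun i _ => h i), Finset.sum_neg_distrib]
    ring

/-- `H(M, Y^n) - H(M, X^n) ≤ log |M| + H(Y^n) - H(X^n)` -/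
theorem as_card_bound {M X Y : Type*} [Fintype M] [Nonempty M] [Fintype X] [Fintype Y] {n : ℕ}
    (a : X → Y → ℝ) (ha : ∀ x y, 0 ≤ a x y) (ha1 : ∀ x, ∑ y, a x y = 1)
    (p : X → ℝ) (hp : ∀ x, 0 ≤ p x) (hp1 : ∑ x, p x = 1)
    (κ : (Fin n → X) → M → ℝ) (hκ : ∀ x m, 0 ≤ κ x m) (hκ1 : ∀ x, ∑ m, κ x m = 1) :
    ∑ m, ∑ y, negMulLog (asO a (fun m x => (∏ i, p (x i)) * κ x m) m y)
      - ∑ m, ∑ x : Fin n → X, negMulLog ((∏ i, p (x i)) * κ x m)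
    ≤ log (Fintype.card M) + n * ∑ y, negMulLog (outDist a p y) - n * ∑ x, negMulLog (p x) := by
  have hp0 : ∀ x : Fin n → X, 0 ≤ ∏ i, p (x i) := fun x => Finset.prod_nonneg fun _ _ => hp _
  have h1 : ∑ x : Fin n → X, negMulLog (∏ i, p (x i))
      ≤ ∑ m, ∑ x : Fin n → X, negMulLog ((∏ i, p (x i)) * κ x m) := by
    rw [Finset.sum_comm]
    refine Finset.sum_le_sum fun x _ => ?_
    simp only [negMulLog_mul]
    rw [Finset.sum_add_distrib, ← Finset.sum_mul, hκ1, one_mul, ← Finset.mul_sum]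
    have : 0 ≤ ∑ m, negMulLog (κ x m) := Finset.sum_nonneg fun m _ =>
      negMulLog_nonneg (hκ x m)
        ((Finset.single_le_sum (fun i _ => hκ x i) (Finset.mem_univ m)).trans (hκ1 x).le)
    nlinarith [hp0 x]
  rw [as_prod_ent p hp1] at h1
  have hq1 : ∑ y, outDist a p y = 1 := by
    unfold outDist
    rw [Finset.sum_comm]
    simp [← Finset.mul_sum, ha1, hp1]
  have hsum : ∀ y : Fin n → Y, ∑ m, asO a (fun m x => (∏ i, p (x i)) * κ x m) m y
      = ∏ i, outDist a p (y i) := by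
    intro y
    unfold asO outDist
    classical
    rw [Finset.sum_comm, Finset.prod_univ_sum, Fintype.piFinset_univ]
    refine Finset.sum_congr rfl fun x _ => ?_
    rw [Finset.prod_mul_distrib, ← Finset.sum_mul, ← Finset.mul_sum, hκ1, mul_one]
  have hO : ∀ m y, 0 ≤ asO a (fun m x => (∏ i, p (x i)) * κ x m) m y := fun m y =>
    Finset.sum_nonneg fun x _ => mul_nonneg (mul_nonneg (hp0 x) (hκ _ _))
      (Finset.prod_nonneg fun _ _ => ha _ _)
  have h2 : ∑ m, ∑ y, negMulLog (asO a (fun m x => (∏ i, p (x i)) * κ x m) m y)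
      ≤ ∑ y : Fin n → Y, (negMulLog (∏ i, outDist a p (y i))
          + (∏ i, outDist a p (y i)) * log (Fintype.card M)) := by
    rw [Finset.sum_comm]
    refine Finset.sum_le_sum fun y _ => ?_
    have := as_logsum (fun m => asO a (fun m x => (∏ i, p (x i)) * κ x m) m y) (fun _ => 1)
      (fun m => hO m y) (fun _ => zero_le_one) (fun _ h => absurd h one_ne_zero)
    rw [hsum] at this
    simp only [Finset.sum_const, Finset.card_univ, nsmul_eq_mul, mul_one, log_one, sub_zero] at this
    have e : ∑ m, negMulLog (asO a (fun m x => (∏ i, p (x i)) * κ x m) m y)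
      = - ∑ m, asO a (fun m x => (∏ i, p (x i)) * κ x m) m y
        * log (asO a (fun m x => (∏ i, p (x i)) * κ x m) m y) := by
      rw [← Finset.sum_neg_distrib]
      exact Finset.sum_congr rfl fun _ _ => by rw [negMulLog]; ring
    rw [e, negMulLog]
    linarith
  have h3 : ∑ y : Fin n → Y, ∏ i, outDist a p (y i) = 1 :=
    as_sum_vch (X := Unit) (fun _ => outDist a p) (fun _ => hq1) (fun _ => ())
  rw [Finset.sum_add_distrib, ← Finset.sum_mul, h3, as_prod_ent _ hq1] at h2
  linarith

/-- conditional mutual information for a Markov chain `U - X - Y`. -/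
theorem as_condMI {X Y : Type*} [Fintype X] [Fintype Y] {m : ℕ} (c : ℝ)
    (a : X → Y → ℝ) (ha1 : ∀ x, ∑ y, a x y = 1) (pX : X → ℝ)
    (r : Fin m → X → ℝ) (hr : ∀ x, ∑ u, c * r u x = pX x)
    (ch : X → Fin m → ℝ) (pXY : X × Y → ℝ) (hch : ∀ x u, ch x u * pX x = c * r u x)
    (hpXY : ∀ x y, pXY (x, y) = pX x * a x y) :
    condMI (fun w : Fin m × X × Y => ch w.2.1 w.1 * pXY (w.2.1, w.2.2))
      (fun w => w.1) (fun w => w.2.1) (fun w => w.2.2)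
    = c * ∑ u, (∑ y, negMulLog (outDist a (r u) y) - ∑ x, negMulLog (r u x))
      + ∑ x, negMulLog (pX x) - ∑ y, negMulLog (outDist a pX y) := by
  classical
  have hw : ∀ w : Fin m × X × Y, ch w.2.1 w.1 * pXY (w.2.1, w.2.2)
      = (c * r w.1 w.2.1) * a w.2.1 w.2.2 := by
    intro w; rw [hpXY, ← mul_assoc, hch]
  have hent : ∀ {α : Type _} [Fintype α] (p : α → ℝ), entropy p = ∑ x, negMulLog (p x) := by
    intro α _ p
    rw [entropy, ← Finset.sum_neg_distrib]
    exact Finset.sum_congr rfl fun _ _ => by rw [negMulLog]; ring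
  have hent2 : ∀ {α : Type _} [Fintype α] (p : α → ℝ), entropy p = ∑ x, negMulLog (p x) := by
    intro α _ p
    rw [entropy, ← Finset.sum_neg_distrib]
    exact Finset.sum_congr rfl fun _ _ => by rw [negMulLog]; ring
  have hent3 : ∀ {α : Type _} [Fintype α] (p : α → ℝ), entropy p = ∑ x, negMulLog (p x) := by
    intro α _ p
    rw [entropy, ← Finset.sum_neg_distrib]
    exact Finset.sum_congr rfl fun _ _ => by rw [negMulLog]; ring
  have hent4 : ∀ {α : Type _} [Fintype α] (p : α → ℝ), entropy p = ∑ x, negMulLog (p x) := by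
    intro α _ p
    rw [entropy, ← Finset.sum_neg_distrib]
    exact Finset.sum_congr rfl fun _ _ => by rw [negMulLog]; ring
  simp only [hw]
  unfold condMI
  have e1 : ∀ u y, pushf (fun w : Fin m × X × Y => (c * r w.1 w.2.1) * a w.2.1 w.2.2)
      (fun w => (w.1, w.2.2)) (u, y) = c * outDist a (r u) y := by
    intro u y
    unfold pushf outDist
    simp only [Fintype.sum_prod_type, Prod.mk.injEq, ite_and, Finset.sum_ite_irrel,
      Finset.sum_const_zero, Finset.sum_ite_eq', Finset.mem_univ, if_true, Finset.mul_sum]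
    exact Finset.sum_congr rfl fun _ _ => by ring
  have e2 : ∀ x y, pushf (fun w : Fin m × X × Y => (c * r w.1 w.2.1) * a w.2.1 w.2.2)
      (fun w => (w.2.1, w.2.2)) (x, y) = pX x * a x y := by
    intro x y
    unfold pushf
    simp only [Fintype.sum_prod_type, Prod.mk.injEq, ite_and, Finset.sum_ite_irrel,
      Finset.sum_const_zero, Finset.sum_ite_eq', Finset.mem_univ, if_true]
    rw [← Finset.sum_mul, hr]
  have e3 : ∀ u x y, pushf (fun w : Fin m × X × Y => (c * r w.1 w.2.1) * a w.2.1 w.2.2)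
      (fun w => (w.1, w.2.1, w.2.2)) (u, x, y) = (c * r u x) * a x y := by
    intro u x y
    unfold pushf
    simp only [Prod.mk.eta, Finset.sum_ite_eq', Finset.mem_univ, if_true]
  have e4 : ∀ y, pushf (fun w : Fin m × X × Y => (c * r w.1 w.2.1) * a w.2.1 w.2.2)
      (fun w => w.2.2) y = outDist a pX y := by
    intro y
    unfold pushf outDist
    simp only [Fintype.sum_prod_type,
      Finset.sum_ite_eq', Finset.mem_univ, if_true]
    rw [Finset.sum_comm]
    exact Finset.sum_congr rfl fun x _ => by rw [← Finset.sum_mul, hr]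
  rw [hent, hent2, hent3, hent4]
  simp only [Fintype.sum_prod_type, e1, e2, e3, e4]
  simp only [negMulLog_mul, Finset.sum_add_distrib, ← Finset.mul_sum, ← Finset.sum_mul, ha1,
    Finset.sum_sub_distrib]
  have s1 : ∑ u, ∑ y, outDist a (r u) y = ∑ u, ∑ x, r u x := by
    refine Finset.sum_congr rfl fun u _ => ?_
    unfold outDist
    rw [Finset.sum_comm]
    simp [← Finset.mul_sum, ha1]
  have s2 : ∑ u, ∑ x, c * r u x * ∑ y, negMulLog (a x y)
      = ∑ x, pX x * ∑ y, negMulLog (a x y) := by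
    rw [Finset.sum_comm]
    exact Finset.sum_congr rfl fun x _ => by rw [← Finset.sum_mul, hr]
  simp only [one_mul] at *
  rw [s1, s2]
  simp only [mul_sub, Finset.mul_sum, Finset.sum_mul]
  ring

theorem as_kl {X Y : Type*} [Fintype X] [Fintype Y]
    (a b : X → Y → ℝ) (hb : ∀ x y, 0 ≤ b x y)
    (ha1 : ∀ x, ∑ y, a x y = 1) (hd : ∀ x y, a x y ≠ 0 → b x y ≠ 0)
    (r s : X → ℝ) (hs : ∀ x, 0 ≤ s x) (hrs : ∀ x, r x ≠ 0 → s x ≠ 0)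
    (T S : ℝ) (hT : ∑ x, r x = T) (hT0 : T ≠ 0) (hS0 : S ≠ 0) :
    klDiv (outDist a (fun x => r x / T)) (outDist b (fun x => s x / S))
      = ((T⁻¹ * ∑ y, askt (outDist a r y) (outDist b s y) - log T + log S : ℝ) : EReal) := by
  have eo : ∀ {a : X → Y → ℝ} {r : X → ℝ} {T : ℝ} (y : Y),
      outDist a (fun x => r x / T) y = outDist a r y / T := by
    intro a r T y
    unfold outDist
    rw [Finset.sum_div]
    exact Finset.sum_congr rfl fun _ _ => by ring
  have hdom : ∀ y, outDist a r y ≠ 0 → outDist b s y ≠ 0 := fun y =>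
    as_pos_sum (fun x => mul_nonneg (hs x) (hb x y)) (fun x => as_dom_mul (hrs x) (hd x y))
  have hsum : ∑ y, outDist a r y = T := by
    unfold outDist
    rw [Finset.sum_comm]
    simp [← Finset.mul_sum, ha1, hT]
  unfold klDiv
  rw [if_pos]
  · congr 1
    have : ∀ y, outDist a (fun x => r x / T) y * log (outDist a (fun x => r x / T) y
        / outDist b (fun x => s x / S) y)
        = T⁻¹ * askt (outDist a r y) (outDist b s y)
          + outDist a r y * (T⁻¹ * (log S - log T)) := by
      intro y
      rw [eo, eo, askt]
      rcases eq_or_ne (outDist a r y) 0 with h | h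
      · rw [h]; simp
      have h' := hdom y h
      rw [log_div (div_ne_zero h hT0) (div_ne_zero h' hS0), log_div h hT0, log_div h' hS0,
        log_div h h']
      ring
    simp only [this]
    rw [Finset.sum_add_distrib, ← Finset.mul_sum, ← Finset.sum_mul, hsum]
    field_simp
    ring
  · intro y h
    rw [eo] at h ⊢
    by_contra h2
    exact div_ne_zero (hdom y (fun e => h2 (by rw [e, zero_div]))) hS0 h

theorem as_fdiff {X Y Z : Type*} [Fintype X] [Fintype Y] [Fintype Z]
    (aP aQ : X → Y → ℝ) (bP bQ : X → Z → ℝ)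
    (haQ : ∀ x y, 0 ≤ aQ x y) (hbQ : ∀ x y, 0 ≤ bQ x y)
    (haP1 : ∀ x, ∑ y, aP x y = 1) (hbP1 : ∀ x, ∑ y, bP x y = 1)
    (had : ∀ x y, aP x y ≠ 0 → aQ x y ≠ 0) (hbd : ∀ x y, bP x y ≠ 0 → bQ x y ≠ 0)
    (aP' aQ' : X → Y → ℝ) (bP' bQ' : X → Z → ℝ) (pX qX : X → ℝ)
    (eaP : ∀ x y, pX x ≠ 0 → aP' x y = aP x y) (eaQ : ∀ x y, qX x ≠ 0 → aQ' x y = aQ x y)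
    (ebP : ∀ x y, pX x ≠ 0 → bP' x y = bP x y) (ebQ : ∀ x y, qX x ≠ 0 → bQ' x y = bQ x y)
    (r s : X → ℝ) (hr : ∀ x, 0 ≤ r x) (hs : ∀ x, 0 ≤ s x) (hrs : ∀ x, r x ≠ 0 → s x ≠ 0)
    (hrp : ∀ x, r x ≠ 0 → pX x ≠ 0) (hsq : ∀ x, s x ≠ 0 → qX x ≠ 0) (c : ℝ) (hc : 0 < c) :
    ((c * (∑ y, askt (outDist aP r y) (outDist aQ s y)
        - ∑ z, askt (outDist bP r z) (outDist bQ s z)) : ℝ) : EReal)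
    ≤ ((∑ x, c * r x : ℝ) : EReal) * fdiff aP' bP' aQ' bQ' qX
        (fun x => c * r x / ∑ x', c * r x') := by
  have e0 : (fun x => c * r x / ∑ x', c * r x') = fun x => r x / ∑ x', r x' := by
    funext x
    rw [← Finset.mul_sum, mul_div_mul_left _ _ hc.ne']
  rw [e0, ← Finset.mul_sum]
  rcases eq_or_ne (∑ x, r x) 0 with h | h
  · have hr0 : ∀ x, r x = 0 := fun x =>
      (Finset.sum_eq_zero_iff_of_nonneg (fun i _ => hr i)).1 h x (Finset.mem_univ _)
    rw [h]
    simp [outDist, askt, hr0]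
  · have hS : ∑ x, s x ≠ 0 := as_pos_sum hs hrs h
    have hTpos : 0 < ∑ x, r x := lt_of_le_of_ne (Finset.sum_nonneg fun x _ => hr x) h.symm
    have hSpos : 0 < ∑ x, s x := lt_of_le_of_ne (Finset.sum_nonneg fun x _ => hs x) hS.symm
    have o1 : ∀ {W : Type _} (f g : X → W → ℝ) (t p : X → ℝ) (T : ℝ)
        (_ : ∀ x y, p x ≠ 0 → f x y = g x y) (_ : ∀ x, t x ≠ 0 → p x ≠ 0),
        (fun y => ∑ x, t x / T * f x y) = fun y => ∑ x, t x / T * g x y := by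
      intro W f g t p T h1 h2
      funext y
      refine Finset.sum_congr rfl fun x _ => ?_
      rcases eq_or_ne (t x) 0 with e | e
      · simp [e]
      · rw [h1 x y (h2 x e)]
    have o2 : ∀ {W : Type _} (f g : X → W → ℝ) (t p : X → ℝ) (T : ℝ)
        (_ : ∀ x y, p x ≠ 0 → f x y = g x y) (_ : ∀ x, t x ≠ 0 → p x ≠ 0),
        (fun y => ∑ x, t x / T * f x y) = fun y => ∑ x, t x / T * g x y := by
      intro W f g t p T h1 h2
      funext y
      refine Finset.sum_congr rfl fun x _ => ?_
      rcases eq_or_ne (t x) 0 with e | e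
      · simp [e]
      · rw [h1 x y (h2 x e)]
    have k1 := as_kl aP aQ haQ haP1 had r s hs hrs _ _ rfl h hS
    have k2 := as_kl bP bQ hbQ hbP1 hbd r s hs hrs _ _ rfl h hS
    have hf : klDiv (outDist aP' (fun x => r x / ∑ x', r x'))
          (outDist aQ' (fun x => s x / ∑ x', s x'))
        - klDiv (outDist bP' (fun x => r x / ∑ x', r x'))
          (outDist bQ' (fun x => s x / ∑ x', s x'))
        ≤ fdiff aP' bP' aQ' bQ' qX (fun x => r x / ∑ x', r x') := by
      refine le_sSup ⟨fun x => s x / ∑ x', s x', ⟨fun x => div_nonneg (hs x) hSpos.le, ?_⟩, ?_, rfl⟩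
      · rw [← Finset.sum_div, div_self hS]
      · intro x hx
        by_contra h2
        exact hsq x (fun e => h2 (by simp [e])) hx
    have r1 : outDist aP' (fun x => r x / ∑ x', r x') = outDist aP (fun x => r x / ∑ x', r x') :=
      o1 aP' aP r pX _ eaP hrp
    have r2 : outDist aQ' (fun x => s x / ∑ x', s x') = outDist aQ (fun x => s x / ∑ x', s x') :=
      o1 aQ' aQ s qX _ eaQ hsq
    have r3 : outDist bP' (fun x => r x / ∑ x', r x') = outDist bP (fun x => r x / ∑ x', r x') :=
      o2 bP' bP r pX _ ebP hrp
    have r4 : outDist bQ' (fun x => s x / ∑ x', s x') = outDist bQ (fun x => s x / ∑ x', s x') :=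
      o2 bQ' bQ s qX _ ebQ hsq
    rw [r1, r2, r3, r4, k1, k2, ← EReal.coe_sub] at hf
    refine le_trans (le_of_eq ?_) (mul_le_mul_of_nonneg_left hf
      (EReal.coe_nonneg.2 (mul_nonneg hc.le hTpos.le)))
    rw [← EReal.coe_mul]
    congr 1
    field_simp
    ring

theorem as_ereal_sum {ι : Type*} (s : Finset ι) (f : ι → ℝ) :
    ((∑ i ∈ s, f i : ℝ) : EReal) = ∑ i ∈ s, (f i : EReal) := by
  classical
  induction s using Finset.induction_on with
  | empty => simp
  | insert i s hi ih => rw [Finset.sum_insert hi, Finset.sum_insert hi, EReal.coe_add, ih]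

theorem as_err_kl {X W : Type*} [Fintype X] [Fintype W] {n K : ℕ} {M : Type*} [Fintype M]
    (e : M ≃ Fin K)
    (pXW qXW : X × W → ℝ) (pX qX : X → ℝ) (aP aQ : X → W → ℝ)
    (hp : ∀ x w, pXW (x, w) = pX x * aP x w) (hq : ∀ x w, qXW (x, w) = qX x * aQ x w)
    (hqX : ∀ x, 0 ≤ qX x) (haQ : ∀ x y, 0 ≤ aQ x y)
    (hd : ∀ x, pX x ≠ 0 → qX x ≠ 0) (had : ∀ x y, aP x y ≠ 0 → aQ x y ≠ 0)
    (κ : (Fin n → X) → Fin K → ℝ) (hκ : ∀ x m, 0 ≤ κ x m) :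
    klDiv (fun mw : Fin K × (Fin n → W) => ∑ x : Fin n → X, (∏ i, pXW (x i, mw.2 i)) * κ x mw.1)
      (fun mw : Fin K × (Fin n → W) => ∑ x : Fin n → X, (∏ i, qXW (x i, mw.2 i)) * κ x mw.1)
    = ((∑ m, ∑ y, askt (asO aP (fun (m : M) x => (∏ i, pX (x i)) * κ x (e m)) m y)
        (asO aQ (fun (m : M) x => (∏ i, qX (x i)) * κ x (e m)) m y) : ℝ) : EReal) := by
  have e1 : ∀ (p : X → ℝ) (a : X → W → ℝ) (m : M) (y : Fin n → W),
      asO a (fun (m : M) x => (∏ i, p (x i)) * κ x (e m)) m y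
      = ∑ x : Fin n → X, (∏ i, (p (x i) * a (x i) (y i))) * κ x (e m) := by
    intro p a m y
    unfold asO
    refine Finset.sum_congr rfl fun x _ => ?_
    rw [Finset.prod_mul_distrib]; ring
  simp only [e1, hp, hq]
  unfold klDiv
  rw [if_pos]
  · congr 1
    rw [Fintype.sum_prod_type]
    exact (Fintype.sum_equiv e _ _ fun m => rfl).symm
  · rintro ⟨m, y⟩ h
    by_contra h2
    refine as_pos_sum (fun x => ?_) (fun x => ?_) h2 h
    · exact mul_nonneg (Finset.prod_nonneg fun i _ => mul_nonneg (hqX _) (haQ _ _)) (hκ _ _)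
    · exact as_dom_mul (as_dom_prod fun i => as_dom_mul (hd _) (had _ _)) id

/-- a totally defined version of the pair of conditional pmfs -/
theorem as_channels {X Y : Type*} [Fintype X] [Fintype Y] (p q : X × Y → ℝ)
    (hp : ∀ a, 0 ≤ p a) (hq : ∀ a, 0 ≤ q a) (hq1 : ∑ x, margFst q x = 1)
    (hd : ∀ a, q a = 0 → p a = 0) :
    ∃ aP aQ : X → Y → ℝ, (∀ x y, 0 ≤ aP x y) ∧ (∀ x y, 0 ≤ aQ x y) ∧
      (∀ x, ∑ y, aP x y = 1) ∧ (∀ x, ∑ y, aQ x y = 1) ∧ (∀ x y, aP x y ≠ 0 → aQ x y ≠ 0) ∧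
      (∀ x y, margFst p x ≠ 0 → condSnd p x y = aP x y) ∧
      (∀ x y, margFst q x ≠ 0 → condSnd q x y = aQ x y) ∧
      (∀ x y, p (x, y) = margFst p x * aP x y) ∧ (∀ x y, q (x, y) = margFst q x * aQ x y) := by
  classical
  have hm : ∀ (p : X × Y → ℝ), (∀ a, 0 ≤ p a) → ∀ x, 0 ≤ margFst p x := fun p hp x =>
    Finset.sum_nonneg fun y _ => hp _
  have hm0 : ∀ (p : X × Y → ℝ), (∀ a, 0 ≤ p a) → ∀ x y, margFst p x = 0 → p (x, y) = 0 :=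
    fun p hp x y e => (Finset.sum_eq_zero_iff_of_nonneg (fun i _ => hp _)).1 e y (Finset.mem_univ _)
  have hc1 : ∀ (p : X × Y → ℝ) x, margFst p x ≠ 0 → ∑ y, condSnd p x y = 1 := by
    intro p x h
    unfold condSnd
    rw [← Finset.sum_div]
    exact div_self h
  let aQ : X → Y → ℝ := fun x y => if margFst q x = 0 then ∑ x', q (x', y) else condSnd q x y
  let aP : X → Y → ℝ := fun x y => if margFst p x = 0 then aQ x y else condSnd p x y
  have haQ : ∀ x y, 0 ≤ aQ x y := by
    intro x y
    by_cases h : margFst q x = 0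
    · simp only [aQ, h, if_true]; exact Finset.sum_nonneg fun _ _ => hq _
    · simp only [aQ, h, if_false]; exact div_nonneg (hq _) (hm q hq x)
  have haQ1 : ∀ x, ∑ y, aQ x y = 1 := by
    intro x
    by_cases h : margFst q x = 0
    · simp only [aQ, h, if_true]
      rw [Finset.sum_comm]; exact hq1
    · simp only [aQ, h, if_false]; exact hc1 q x h
  refine ⟨aP, aQ, ?_, haQ, ?_, haQ1, ?_, ?_, ?_, ?_, ?_⟩
  · intro x y
    by_cases h : margFst p x = 0
    · simp only [aP, h, if_true]; exact haQ x y
    · simp only [aP, h, if_false]; exact div_nonneg (hp _) (hm p hp x)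
  · intro x
    by_cases h : margFst p x = 0
    · simp only [aP, h, if_true]; exact haQ1 x
    · simp only [aP, h, if_false]; exact hc1 p x h
  · intro x y
    by_cases h : margFst p x = 0
    · simp only [aP, h, if_true]; exact id
    · simp only [aP, h, if_false]
      intro h1
      have h2 : q (x, y) ≠ 0 := fun e => h1 (by simp [condSnd, hd _ e])
      have h3 : margFst q x ≠ 0 := fun e => h2 (hm0 q hq x y e)
      simp only [aQ, h3, if_false]
      exact div_ne_zero h2 h3
  · intro x y h; simp only [aP, h, if_false]
  · intro x y h; simp only [aQ, h, if_false]
  · intro x y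
    by_cases h : margFst p x = 0
    · rw [h, hm0 p hp x y h, zero_mul]
    · simp only [aP, h, if_false, condSnd]; field_simp
  · intro x y
    by_cases h : margFst q x = 0
    · rw [h, hm0 q hq x y h, zero_mul]
    · simp only [aQ, h, if_false, condSnd]; field_simp

theorem as_main {X : Type uX} {Y : Type uY} {Z : Type uZ} [Fintype X] [Fintype Y] [Fintype Z]
    (R : ℝ) (hR : 0 < R) (pXY qXY : X × Y → ℝ) (pXZ qXZ : X × Z → ℝ)
    (hpXY : ∀ a, 0 ≤ pXY a) (hqXY : ∀ a, 0 ≤ qXY a) (hpXZ : ∀ a, 0 ≤ pXZ a) (hqXZ : ∀ a, 0 ≤ qXZ a)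
    (hdY : ∀ a, qXY a = 0 → pXY a = 0) (hdZ : ∀ a, qXZ a = 0 → pXZ a = 0)
    (hpm : margFst pXZ = margFst pXY) (hqm : margFst qXZ = margFst qXY)
    (hp1 : ∑ x, margFst pXY x = 1) (hq1 : ∑ x, margFst qXY x = 1) :
    errExp pXY qXY R ≤ Gexp pXY qXY pXZ qXZ R + errExp pXZ qXZ R := by
  classical
  obtain ⟨aP, aQ, haP, haQ, haP1, haQ1, had, eaP, eaQ, faP, faQ⟩ :=
    as_channels pXY qXY hpXY hqXY hq1 hdY
  obtain ⟨bP, bQ, hbP, hbQ, hbP1, hbQ1, hbd, ebP, ebQ, fbP, fbQ⟩ :=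
    as_channels pXZ qXZ hpXZ hqXZ (by rw [hqm]; exact hq1) hdZ
  rw [hpm] at ebP fbP
  rw [hqm] at ebQ fbQ
  have hpX : ∀ x, 0 ≤ margFst pXY x := fun x => Finset.sum_nonneg fun _ _ => hpXY _
  have hqX : ∀ x, 0 ≤ margFst qXY x := fun x => Finset.sum_nonneg fun _ _ => hqXY _
  have hdX : ∀ x, margFst pXY x ≠ 0 → margFst qXY x ≠ 0 := fun x =>
    as_pos_sum (fun y => hqXY (x, y)) (fun y h e => h (hdY _ e))
  generalize hpXd : margFst pXY = pX at *
  generalize hqXd : margFst qXY = qX at *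
  refine sSup_le ?_
  rintro v ⟨n, hn, κ, hκ, rfl⟩
  have hn' : (0 : ℝ) < n := Nat.cast_pos.2 hn
  generalize hK : 2 ^ ⌊(n : ℝ) * R⌋₊ = K at κ
  have hKpos : 0 < K := by rw [← hK]; positivity
  have hKlog : log K ≤ n * R := by
    rw [← hK]
    push_cast
    rw [log_pow]
    have h1 : (⌊(n : ℝ) * R⌋₊ : ℝ) ≤ n * R := Nat.floor_le (by positivity)
    have h2 : log 2 ≤ 1 := by linarith [Real.log_two_lt_d9]
    have h3 : 0 ≤ log 2 := Real.log_nonneg (by norm_num)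
    nlinarith
  set M := ULift.{max uY uZ} (Fin K)
  have : Nonempty M := ⟨⟨⟨0, hKpos⟩⟩⟩
  let e : M ≃ Fin K := Equiv.ulift
  have hcard : Fintype.card M = K := by rw [Fintype.card_congr e, Fintype.card_fin]
  have hκ0 : ∀ x m, 0 ≤ κ x m := fun x m => (hκ x).1 m
  have hκ1 : ∀ x, ∑ m : M, κ x (e m) = 1 := fun x => by
    rw [← (hκ x).2]; exact Fintype.sum_equiv e _ _ fun _ => rfl
  obtain ⟨U, hU, r', s', hr', hs', hrs', hrφ', hsφ', hD', hIY', hIZ'⟩ :=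
    as_single_letter aP aQ bP bQ haP haQ hbP hbQ haP1 haQ1 hbP1 hbQ1 had hbd n M
      (fun m x => (∏ i, pX (x i)) * κ x (e m)) (fun m x => (∏ i, qX (x i)) * κ x (e m))
      (fun m x => mul_nonneg (Finset.prod_nonneg fun _ _ => hpX _) (hκ0 _ _))
      (fun m x => mul_nonneg (Finset.prod_nonneg fun _ _ => hqX _) (hκ0 _ _))
      (fun m x => as_dom_mul (as_dom_prod fun _ => hdX _) id)
  have cbY := as_card_bound aP haP haP1 pX hpX hp1 (fun x (m : M) => κ x (e m))
    (fun _ _ => hκ0 _ _) hκ1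
  have cbZ := as_card_bound bP hbP hbP1 pX hpX hp1 (fun x (m : M) => κ x (e m))
    (fun _ _ => hκ0 _ _) hκ1
  rw [hcard] at cbY cbZ
  -- marginals
  have hφ : ∀ (p φ : X → ℝ), ∑ x, p x = 1 →
      ∑ m : M, ∑ x : Fin n → X, (∏ i, p (x i)) * κ x (e m) * ∑ i, φ (x i)
      = n * ∑ x, p x * φ x := by
    intro p φ h
    rw [← as_prod_marg p h, Finset.sum_comm]
    refine Finset.sum_congr rfl fun x _ => ?_
    rw [← Finset.sum_mul, ← Finset.mul_sum, hκ1, mul_one]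
  simp only [hφ _ _ hp1] at hrφ'
  simp only [hφ _ _ hq1] at hsφ'
  -- relabel by `Fin k`
  let k := Fintype.card U
  let g : Fin k ≃ U := (Fintype.equivFin U).symm
  have hg : ∀ F : U → ℝ, ∑ u, F u = ∑ u : Fin k, F (g u) := fun F =>
    (Fintype.sum_equiv g _ _ fun _ => rfl).symm
  simp only [hg] at hrφ' hsφ' hD' hIY' hIZ'
  set r : Fin k → X → ℝ := fun u => r' (g u) with hrd
  set s : Fin k → X → ℝ := fun u => s' (g u) with hsd
  have hr : ∀ u x, 0 ≤ r u x := fun u x => hr' _ _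
  have hs : ∀ u x, 0 ≤ s u x := fun u x => hs' _ _
  have hrs : ∀ u x, r u x ≠ 0 → s u x ≠ 0 := fun u x => hrs' _ _
  have marg : ∀ (r : Fin k → X → ℝ) (p : X → ℝ),
      (∀ φ : X → ℝ, ∑ u, ∑ x, r u x * φ x = n * ∑ x, p x * φ x) →
      ∀ x, ∑ u, r u x = n * p x := by
    intro r p h x
    have := h (fun x' => if x' = x then 1 else 0)
    simpa using this
  have hrm := marg r pX hrφ'
  have hsm := marg s qX hsφ'
  have sup0 : ∀ (r : Fin k → X → ℝ) (p : X → ℝ), (∀ u x, 0 ≤ r u x) →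
      (∀ x, ∑ u, r u x = n * p x) → ∀ u x, r u x ≠ 0 → p x ≠ 0 := by
    intro r p h0 h u x h1 h2
    have := h x
    rw [h2, mul_zero] at this
    exact h1 ((Finset.sum_eq_zero_iff_of_nonneg (fun i _ => h0 i x)).1 this u (Finset.mem_univ _))
  have hrp := sup0 r pX hr hrm
  have hsq := sup0 s qX hs hsm
  obtain ⟨x₁, -, hx₁⟩ : ∃ x ∈ Finset.univ, pX x ≠ 0 :=
    Finset.exists_ne_zero_of_sum_ne_zero (by rw [hp1]; exact one_ne_zero)
  let τ : X → X := fun x => if pX x = 0 then x₁ else x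
  have hτ : ∀ x, pX (τ x) ≠ 0 := by
    intro x
    by_cases h : pX x = 0
    · simp only [τ, h, if_true]; exact hx₁
    · simp only [τ, h, if_false]; exact h
  let ch : X → Fin k → ℝ := fun x u => (n : ℝ)⁻¹ * r u (τ x) / pX (τ x)
  have hch : ∀ x u, ch x u * pX x = (n : ℝ)⁻¹ * r u x := by
    intro x u
    by_cases h : pX x = 0
    · have : r u x = 0 := by by_contra h1; exact hrp u x h1 h
      rw [h, this]; simp
    · simp only [ch, τ, h, if_false]; field_simp
  have hchp : ∀ x, IsPMF (ch x) := by
    intro x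
    refine ⟨fun u => div_nonneg (mul_nonneg (by positivity) (hr _ _)) (hpX _), ?_⟩
    simp only [ch]
    rw [← Finset.sum_div, ← Finset.mul_sum, hrm]
    have := hτ x
    field_simp
  have hcr : ∀ x, ∑ u, (n : ℝ)⁻¹ * r u x = pX x := by
    intro x
    rw [← Finset.mul_sum, hrm]; field_simp
  have hIY := as_condMI (n : ℝ)⁻¹ aP haP1 pX r hcr ch pXY hch faP
  have hIZ := as_condMI (n : ℝ)⁻¹ bP hbP1 pX r hcr ch pXZ hch fbP
  have fin : ∀ A B C : ℝ, A ≤ log K + n * B - n * C → (n : ℝ)⁻¹ * A + C - B ≤ R := by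
    intro A B C h
    have h1 : (n : ℝ)⁻¹ * A ≤ (n : ℝ)⁻¹ * (n * R + n * B - n * C) :=
      mul_le_mul_of_nonneg_left (by linarith) (by positivity)
    have h2 : (n : ℝ)⁻¹ * (n * R + n * B - n * C) = R + B - C := by field_simp
    linarith
  have hG : (((n : ℝ)⁻¹ * ∑ u, (∑ y, askt (outDist aP (r u) y) (outDist aQ (s u) y)
            - ∑ z, askt (outDist bP (r u) z) (outDist bQ (s u) z)) : ℝ) : EReal)
      ≤ Gexp pXY qXY pXZ qXZ R := by
    refine le_trans ?_ (le_sSup ⟨k, ch, hchp, ?_, ?_, rfl⟩)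
    · rw [Finset.mul_sum, as_ereal_sum]
      refine Finset.sum_le_sum fun u _ => ?_
      rw [hpXd, hqXd]
      simp only [hch]
      exact as_fdiff aP aQ bP bQ haQ hbQ haP1 hbP1 had hbd _ _ _ _ pX qX eaP eaQ ebP ebQ
        (r u) (s u) (hr u) (hs u) (hrs u) (hrp u) (hsq u) _ (by positivity)
    · rw [hIY]
      exact fin _ _ _ (hIY'.trans cbY)
    · rw [hIZ]
      exact fin _ _ _ (hIZ'.trans cbZ)
  have klY := as_err_kl e pXY qXY pX qX aP aQ faP faQ hqX haQ hdX had κ hκ0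
  have klZ := as_err_kl e pXZ qXZ pX qX bP bQ fbP fbQ hqX hbQ hdX hbd κ hκ0
  have hE : (((n : ℝ)⁻¹ : ℝ) : EReal) * klDiv
        (fun mw : Fin K × (Fin n → Z) => ∑ x : Fin n → X, (∏ i, pXZ (x i, mw.2 i)) * κ x mw.1)
        (fun mw : Fin K × (Fin n → Z) => ∑ x : Fin n → X, (∏ i, qXZ (x i, mw.2 i)) * κ x mw.1)
      ≤ errExp pXZ qXZ R := by
    subst hK
    exact le_sSup ⟨n, hn, κ, hκ, rfl⟩
  rw [klZ, ← EReal.coe_mul] at hE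
  rw [klY, ← EReal.coe_mul]
  refine le_trans (le_of_eq ?_) (add_le_add hG hE)
  rw [← EReal.coe_add]
  congr 1
  rw [← hD']
  ring

theorem as_pushf_nonneg {Ω α : Type*} [Fintype Ω] (p : Ω → ℝ) (f : Ω → α) (hp : ∀ w, 0 ≤ p w)
    (a : α) : 0 ≤ pushf p f a := by
  unfold pushf
  exact Finset.sum_nonneg fun w _ => by split_ifs; exacts [hp w, le_rfl]

theorem as_marg_push1 {X Y Z : Type*} [Fintype X] [Fintype Y] [Fintype Z] (P : X × Y × Z → ℝ) :
    margFst (pushf P (fun w => (w.1, w.2.1))) = fun x => ∑ y, ∑ z, P (x, y, z) := by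
  classical
  funext x
  unfold margFst pushf
  simp only [Fintype.sum_prod_type, Prod.mk.injEq, ite_and, Finset.sum_ite_irrel,
      Finset.sum_const_zero, Finset.sum_ite_eq', Finset.mem_univ, if_true]
  rw [Finset.sum_comm]
  refine Finset.sum_congr rfl fun y _ => ?_
  rw [Finset.sum_comm]
  simp

theorem as_marg_push2 {X Y Z : Type*} [Fintype X] [Fintype Y] [Fintype Z] (P : X × Y × Z → ℝ) :
    margFst (pushf P (fun w => (w.1, w.2.2))) = fun x => ∑ y, ∑ z, P (x, y, z) := by
  classical
  funext x
  unfold margFst pushf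
  simp only [Fintype.sum_prod_type, Prod.mk.injEq, ite_and, Finset.sum_ite_irrel,
      Finset.sum_const_zero, Finset.sum_ite_eq', Finset.mem_univ, if_true]
  exact Finset.sum_comm

theorem as_dom_of_kl {α : Type*} [Fintype α] (p q : α → ℝ) (h : klDiv p q < ⊤) :
    ∀ a, q a = 0 → p a = 0 := by
  by_contra h2
  unfold klDiv at h
  rw [if_neg h2] at h
  exact lt_irrefl _ h

end AddSub

/-- The add-and-subtract upper bound:
`E_{P_XY,Q_XY}(R) ≤ G_{P_XY,Q_XY,P_XZ,Q_XZ}(R) + E_{P_XZ,Q_XZ}(R)`. -/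
theorem add_and_subtract_bound {X Y Z : Type*} [Fintype X] [Fintype Y] [Fintype Z]
    (R : ℝ) (hR : 0 < R)
    (P Q : X × Y × Z → ℝ) (hP : IsPMF P) (hQ : IsPMF Q)
    (hXY : klDiv (pushf P (fun w => (w.1, w.2.1))) (pushf Q (fun w => (w.1, w.2.1))) < ⊤)
    (hXZ : klDiv (pushf P (fun w => (w.1, w.2.2))) (pushf Q (fun w => (w.1, w.2.2))) < ⊤) :
    errExp (pushf P (fun w => (w.1, w.2.1))) (pushf Q (fun w => (w.1, w.2.1))) R ≤
      Gexp (pushf P (fun w => (w.1, w.2.1))) (pushf Q (fun w => (w.1, w.2.1)))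
        (pushf P (fun w => (w.1, w.2.2))) (pushf Q (fun w => (w.1, w.2.2))) R
      + errExp (pushf P (fun w => (w.1, w.2.2))) (pushf Q (fun w => (w.1, w.2.2))) R := by
  have hm : ∀ P : X × Y × Z → ℝ, IsPMF P →
      ∑ x, margFst (pushf P (fun w => (w.1, w.2.1))) x = 1 := by
    intro P h
    rw [as_marg_push1, ← h.2]
    simp only [Fintype.sum_prod_type]
  exact as_main R hR _ _ _ _ (as_pushf_nonneg _ _ hP.1) (as_pushf_nonneg _ _ hQ.1)
    (as_pushf_nonneg _ _ hP.1) (as_pushf_nonneg _ _ hQ.1) (as_dom_of_kl _ _ hXY)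
    (as_dom_of_kl _ _ hXZ) (by rw [as_marg_push1, as_marg_push2])
    (by rw [as_marg_push1, as_marg_push2]) (hm P hP) (hm Q hQ)

end
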